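/- arXiv:2109.01315 — 2 statements merged into one kernel-verified Lean document; each statement's English description precedes it below -/
import Mathlib

section
/- Let A be a densely defined closed operator on a complex Hilbert space H which is EP. Then the operator AA*, defined by y ↦ A(A*y) on the domain {y ∈ D(A*) : A*y ∈ D(A)}, is a densely defined closed operator which is EP; moreover R(AA*) = R(A) and R(AA*) is closed. -/
open scoped InnerProductSpace
open LinearPMap

noncomputable section

variable {H : Type*} [NormedAddCommGroup H] [InnerProductSpace ℂ H] [CompleteSpace H]

/-- The range `R(A)` of a partially defined operator, as a submodule of `H`. -/
def LinearPMap.ran (A : H →ₗ.[ℂ] H) : Submodule ℂ H :=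
  LinearMap.range A.toFun

/-- The null space `N(A)` of a partially defined operator, as a submodule of `H`. -/
def LinearPMap.nul (A : H →ₗ.[ℂ] H) : Submodule ℂ H :=
  (LinearMap.ker A.toFun).map A.domain.subtype

/-! The graph of `A` and the rotated graph of `A†` are orthogonal complements in `E × F`, so every
`(0, b)` is `(x - A† u, A x + u)` for some `x` and `u`; that is, `A A† + 1` is surjective. Together
with symmetry this makes `A A†` densely defined and self-adjoint (von Neumann), hence closed with
`R(A A†) = R((A A†)†)`. If `R(A)` is closed, the open mapping theorem bounds some preimage of each
`y ∈ R(A)` by a multiple of `‖y‖`, so Riesz representation gives `R(A†) = N(A)ᗮ`. Subtracting from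
`x ∈ D(A)` its component in `N(A)` does not change `A x` and leaves an element of `R(A†)`, so
`R(A) ⊆ R(A A†)`. -/

section MaxComp

variable {R E F G : Type*} [Ring R] [AddCommGroup E] [Module R E] [AddCommGroup F] [Module R F]
  [AddCommGroup G] [Module R G] {S : F →ₗ.[R] G} {A : E →ₗ.[R] F}

/-- The product `S A` of unbounded operators, on its maximal domain `{x ∈ D(A) : A x ∈ D(S)}`;
`LinearPMap.comp` instead requires `A` to map all of its domain into that of `S`. -/
def maxComp (S : F →ₗ.[R] G) (A : E →ₗ.[R] F) : E →ₗ.[R] G :=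
  S.comp (A.domRestrict ((S.domain.comap A.toFun).map A.domain.subtype)) <| by
    rintro ⟨_, ⟨x, hx, rfl⟩, -⟩
    exact hx

theorem mem_domain_maxComp {x : E} :
    x ∈ (maxComp S A).domain ↔ ∃ hx : x ∈ A.domain, A ⟨x, hx⟩ ∈ S.domain := by
  change x ∈ (S.domain.comap A.toFun).map A.domain.subtype ⊓ A.domain ↔ _
  simp

theorem maxComp_apply {x : E} (hx : x ∈ (maxComp S A).domain) (hxA : x ∈ A.domain)
    (hxS : A ⟨x, hxA⟩ ∈ S.domain) : maxComp S A ⟨x, hx⟩ = S ⟨A ⟨x, hxA⟩, hxS⟩ :=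
  rfl

theorem eq_maxComp {T : E →ₗ.[R] G}
    (hdom : ∀ x, x ∈ T.domain ↔ ∃ hx : x ∈ A.domain, A ⟨x, hx⟩ ∈ S.domain)
    (hval : ∀ (x : E) (hx : x ∈ T.domain) (hxA : x ∈ A.domain) (hxS : A ⟨x, hxA⟩ ∈ S.domain),
      T ⟨x, hx⟩ = S ⟨A ⟨x, hxA⟩, hxS⟩) :
    T = maxComp S A := by
  refine LinearPMap.ext (Submodule.ext fun x ↦ (hdom x).trans mem_domain_maxComp.symm) ?_
  intro x hxT hx
  obtain ⟨hxA, hxS⟩ := mem_domain_maxComp.mp hx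
  exact (hval x hxT hxA hxS).trans (maxComp_apply hx hxA hxS).symm

theorem mem_graph_maxComp {x : E} {z : G} :
    (x, z) ∈ (maxComp S A).graph ↔ ∃ y, (x, y) ∈ A.graph ∧ (y, z) ∈ S.graph := by
  constructor
  · rw [mem_graph_iff]
    rintro ⟨⟨x, hx⟩, rfl, rfl⟩
    obtain ⟨hxA, hxS⟩ := mem_domain_maxComp.mp hx
    exact ⟨A ⟨x, hxA⟩, A.mem_graph ⟨x, hxA⟩, S.mem_graph ⟨_, hxS⟩⟩
  · simp only [mem_graph_iff]
    rintro ⟨_, ⟨⟨x, hxA⟩, rfl, rfl⟩, ⟨_, hxS⟩, rfl, rfl⟩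
    exact ⟨⟨x, mem_domain_maxComp.mpr ⟨hxA, hxS⟩⟩, rfl, rfl⟩

theorem range_maxComp_le : LinearMap.range (maxComp S A).toFun ≤ LinearMap.range S.toFun := by
  rintro _ ⟨x, rfl⟩
  exact ⟨_, rfl⟩

end MaxComp

section NullSpace

variable {R E F : Type*} [Ring R] [AddCommGroup E] [Module R E] [AddCommGroup F] [Module R F]

/-- The null space `N(A)` as a submodule of `E`, for operators between two spaces. It is read off
the graph, so that it is visibly closed when `A` is. -/
def nullSpace (A : E →ₗ.[R] F) : Submodule R E :=
  A.graph.comap (LinearMap.inl R E F)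

theorem mem_nullSpace {A : E →ₗ.[R] F} {x : E} : x ∈ nullSpace A ↔ (x, 0) ∈ A.graph :=
  Iff.rfl

end NullSpace

theorem isClosed_nullSpace {R E F : Type*} [CommRing R] [AddCommGroup E] [Module R E]
    [TopologicalSpace E] [AddCommGroup F] [Module R F] [TopologicalSpace F] {A : E →ₗ.[R] F}
    (hc : A.IsClosed) : IsClosed (nullSpace A : Set E) :=
  hc.preimage (Continuous.prodMk_left 0)

theorem exists_apply_eq_norm_le_of_isClosed_range {𝕜 E F : Type*} [NontriviallyNormedField 𝕜]
    [NormedAddCommGroup E] [NormedSpace 𝕜 E] [CompleteSpace E]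
    [NormedAddCommGroup F] [NormedSpace 𝕜 F] [CompleteSpace F] {A : E →ₗ.[𝕜] F}
    (hc : A.IsClosed) (hr : IsClosed (LinearMap.range A.toFun : Set F)) :
    ∃ C : ℝ, ∀ x : A.domain, ∃ x' : A.domain, A x' = A x ∧ ‖(x' : E)‖ ≤ C * ‖A x‖ := by
  have : CompleteSpace A.graph := hc.completeSpace_coe
  have : CompleteSpace (LinearMap.range A.toFun) := hr.completeSpace_coe
  have hmem (p : A.graph) : (p : E × F).2 ∈ LinearMap.range A.toFun := by
    obtain ⟨x, -, hx⟩ := A.mem_graph_iff.mp p.2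
    exact ⟨x, hx⟩
  let sndRange : A.graph →L[𝕜] LinearMap.range A.toFun :=
    ((ContinuousLinearMap.snd 𝕜 E F).comp A.graph.subtypeL).codRestrict _ hmem
  have hsurj : Function.Surjective sndRange := by
    rintro ⟨_, x, rfl⟩
    exact ⟨⟨_, A.mem_graph x⟩, rfl⟩
  obtain ⟨C, -, hC⟩ := sndRange.exists_preimage_norm_le hsurj
  refine ⟨C, fun x ↦ ?_⟩
  obtain ⟨⟨p, hp⟩, hpx, hpC⟩ := hC ⟨A x, x, rfl⟩
  obtain ⟨x', hx'p, hx'⟩ := A.mem_graph_iff.mp hp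
  refine ⟨x', hx'.trans (congrArg Subtype.val hpx), ?_⟩
  rw [hx'p]
  exact (norm_fst_le p).trans hpC

section Hilbert

variable {𝕜 E F : Type*} [RCLike 𝕜] [NormedAddCommGroup E] [InnerProductSpace 𝕜 E]
  [NormedAddCommGroup F] [InnerProductSpace 𝕜 F]

theorem isFormalAdjoint_maxComp {G : Type*} [NormedAddCommGroup G] [InnerProductSpace 𝕜 G]
    {A : E →ₗ.[𝕜] F} {A' : F →ₗ.[𝕜] E} {S : F →ₗ.[𝕜] G} {S' : G →ₗ.[𝕜] F}
    (hS : S.IsFormalAdjoint S') (hA : A.IsFormalAdjoint A') :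
    (maxComp S A).IsFormalAdjoint (maxComp A' S') := by
  rintro ⟨x, hx⟩ ⟨z, hz⟩
  obtain ⟨hxA, hxS⟩ := mem_domain_maxComp.mp hx
  obtain ⟨hzS, hzA⟩ := mem_domain_maxComp.mp hz
  rw [maxComp_apply hx hxA hxS, maxComp_apply hz hzS hzA]
  exact (hS ⟨_, hxS⟩ ⟨z, hzS⟩).trans (hA ⟨x, hxA⟩ ⟨_, hzA⟩)

section SelfAdjoint

variable {T : E →ₗ.[𝕜] E}

theorem inner_add_smul_left_eq_of_isFormalAdjoint {S : E →ₗ.[𝕜] E} (h : S.IsFormalAdjoint T)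
    (c : ℝ) (x : S.domain) (y : T.domain) :
    ⟪S x + (c : 𝕜) • (x : E), (y : E)⟫_𝕜 = ⟪(x : E), T y + (c : 𝕜) • (y : E)⟫_𝕜 := by
  rw [inner_add_left, inner_add_right, h x y, inner_smul_left, inner_smul_right, RCLike.conj_ofReal]

variable [CompleteSpace E] {c : ℝ}

theorem dense_domain_of_isFormalAdjoint_self_of_surjective (hT : T.IsFormalAdjoint T)
    (hsurj : Function.Surjective fun y : T.domain ↦ T y + (c : 𝕜) • (y : E)) :
    Dense (T.domain : Set E) := by
  rw [Submodule.dense_iff_topologicalClosure_eq_top, Submodule.topologicalClosure_eq_top_iff,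
    Submodule.eq_bot_iff]
  intro z hz
  obtain ⟨y, rfl⟩ := hsurj z
  have hy : (y : E) = 0 := by
    refine ext_inner_right 𝕜 fun w ↦ ?_
    obtain ⟨x, rfl⟩ := hsurj w
    rw [← inner_add_smul_left_eq_of_isFormalAdjoint hT, inner_zero_left]
    exact Submodule.inner_left_of_mem_orthogonal x.2 hz
  obtain rfl : y = 0 := Subtype.ext hy
  simp

theorem isSelfAdjoint_of_isFormalAdjoint_self_of_surjective (hT : T.IsFormalAdjoint T)
    (hsurj : Function.Surjective fun y : T.domain ↦ T y + (c : 𝕜) • (y : E)) : IsSelfAdjoint T := by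
  have hd : Dense (T.domain : Set E) :=
    dense_domain_of_isFormalAdjoint_self_of_surjective hT hsurj
  have hle : T ≤ T† := hT.le_adjoint hd
  refine (eq_of_le_of_domain_eq hle (le_antisymm hle.1 fun y hy ↦ ?_)).symm
  obtain ⟨w, hw⟩ := hsurj (T† ⟨y, hy⟩ + (c : 𝕜) • y)
  have hyw : y = w := by
    refine ext_inner_right 𝕜 fun v ↦ ?_
    obtain ⟨x, rfl⟩ := hsurj v
    calc ⟪y, T x + (c : 𝕜) • (x : E)⟫_𝕜
        = ⟪T† ⟨y, hy⟩ + (c : 𝕜) • y, (x : E)⟫_𝕜 :=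
          (inner_add_smul_left_eq_of_isFormalAdjoint
            (adjoint_isFormalAdjoint hd) c ⟨y, hy⟩ x).symm
      _ = ⟪T w + (c : 𝕜) • (w : E), (x : E)⟫_𝕜 := by rw [← hw]
      _ = ⟪(w : E), T x + (c : 𝕜) • (x : E)⟫_𝕜 :=
          inner_add_smul_left_eq_of_isFormalAdjoint hT c w x
  exact hyw ▸ w.2

end SelfAdjoint

variable [CompleteSpace E] [CompleteSpace F] {A : E →ₗ.[𝕜] F}

theorem mem_range_adjoint_of_norm_inner_le (hd : Dense (A.domain : Set E))
    {z : E} {C : ℝ} (hC : ∀ x : A.domain, ‖⟪z, (x : E)⟫_𝕜‖ ≤ C * ‖A x‖) :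
    z ∈ LinearMap.range A†.toFun := by
  let K := (LinearMap.range A.toFun).topologicalClosure
  let e : A.domain →ₗ[𝕜] K :=
    A.toFun.codRestrict K fun x ↦ Submodule.le_topologicalClosure _ ⟨x, rfl⟩
  have he : DenseRange e := by
    refine Subtype.dense_iff.mpr (Eq.subset ?_)
    rw [← Set.range_comp]
    rfl
  let φ : K →L[𝕜] 𝕜 := (innerₛₗ 𝕜 z ∘ₗ A.domain.subtype).extendOfNorm e
  have hφ (x : A.domain) : φ (e x) = ⟪z, (x : E)⟫_𝕜 := LinearMap.extendOfNorm_eq he ⟨C, hC⟩ x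
  let y : K := (InnerProductSpace.toDual 𝕜 K).symm φ
  have hy (x : A.domain) : ⟪z, (x : E)⟫_𝕜 = ⟪(y : F), A x⟫_𝕜 := by
    rw [← hφ]
    exact (InnerProductSpace.toDual_symm_apply (x := e x) (y := φ)).symm
  exact ⟨⟨y, mem_adjoint_domain_of_exists _ ⟨z, hy⟩⟩, adjoint_apply_eq hd _ hy⟩

theorem orthogonal_nullSpace_eq_range_adjoint (hd : Dense (A.domain : Set E))
    (hc : A.IsClosed) (hr : IsClosed (LinearMap.range A.toFun : Set F)) :
    (nullSpace A)ᗮ = LinearMap.range A†.toFun := by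
  apply le_antisymm
  · intro z hz
    obtain ⟨C, hC⟩ := exists_apply_eq_norm_le_of_isClosed_range hc hr
    refine mem_range_adjoint_of_norm_inner_le hd (C := ‖z‖ * C) fun x ↦ ?_
    obtain ⟨x', hx', hx'C⟩ := hC x
    have hsub : (x - x' : E) ∈ nullSpace A := by
      rw [mem_nullSpace, mem_graph_iff]
      exact ⟨x - x', rfl, by rw [A.map_sub, hx', sub_self]⟩
    have hinner : ⟪z, (x : E)⟫_𝕜 = ⟪z, (x' : E)⟫_𝕜 := by
      rw [← sub_eq_zero, ← inner_sub_right]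
      exact Submodule.inner_left_of_mem_orthogonal hsub hz
    calc ‖⟪z, (x : E)⟫_𝕜‖ = ‖⟪z, (x' : E)⟫_𝕜‖ := by rw [hinner]
      _ ≤ ‖z‖ * ‖(x' : E)‖ := norm_inner_le_norm _ _
      _ ≤ ‖z‖ * (C * ‖A x‖) := by gcongr
      _ = ‖z‖ * C * ‖A x‖ := (mul_assoc _ _ _).symm
  · rintro _ ⟨y, rfl⟩
    rw [Submodule.mem_orthogonal']
    intro x hx
    obtain ⟨x, rfl, hAx⟩ := A.mem_graph_iff.mp (mem_nullSpace.mp hx)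
    exact (adjoint_isFormalAdjoint hd y x).trans (by rw [hAx, inner_zero_right])

theorem range_maxComp_adjoint (hd : Dense (A.domain : Set E))
    (hc : A.IsClosed) (hr : IsClosed (LinearMap.range A.toFun : Set F)) :
    LinearMap.range (maxComp A A†).toFun = LinearMap.range A.toFun := by
  refine le_antisymm range_maxComp_le ?_
  rintro _ ⟨x, rfl⟩
  have : CompleteSpace (nullSpace A) := (isClosed_nullSpace hc).completeSpace_coe
  obtain ⟨n, hn, z, hz, hx⟩ := (nullSpace A).exists_add_mem_mem_orthogonal (x : E)
  rw [orthogonal_nullSpace_eq_range_adjoint hd hc hr] at hz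
  obtain ⟨y, rfl⟩ := hz
  have hAy : (A† y, A x) ∈ A.graph := by
    have := A.graph.sub_mem (A.mem_graph x) (mem_nullSpace.mp hn)
    rwa [hx, Prod.mk_sub_mk, add_sub_cancel_left, sub_zero] at this
  obtain ⟨w, -, hw⟩ := (mem_graph_iff _).mp (mem_graph_maxComp.mpr ⟨_, A†.mem_graph y, hAy⟩)
  exact ⟨w, hw⟩

theorem exists_graph_sub_adjoint_graph (hd : Dense (A.domain : Set E))
    (hc : A.IsClosed) (a : E) (b : F) :
    ∃ x y u v, (x, y) ∈ A.graph ∧ (u, v) ∈ A†.graph ∧ x - v = a ∧ y + u = b := by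
  let K : Submodule 𝕜 (WithLp 2 (E × F)) :=
    A.graph.comap (WithLp.linearEquiv 2 𝕜 (E × F)).toLinearMap
  have hK : IsClosed (K : Set (WithLp 2 (E × F))) :=
    hc.preimage (WithLp.prod_continuous_ofLp 2 E F)
  have : CompleteSpace K := hK.completeSpace_coe
  obtain ⟨p, hp, q, hq, hpq⟩ := K.exists_add_mem_mem_orthogonal (WithLp.toLp 2 (a, b))
  have hq' : (q.snd, -q.fst) ∈ A†.graph := by
    rw [adjoint_graph_eq_graph_adjoint hd, Submodule.mem_adjoint_iff]
    intro x y hxy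
    have := (K.mem_orthogonal q).mp hq (WithLp.toLp 2 (x, y)) hxy
    rw [WithLp.prod_inner_apply] at this
    rw [inner_neg_right, sub_neg_eq_add, add_comm]
    exact this
  refine ⟨p.fst, p.snd, q.snd, -q.fst, hp, hq', ?_, (congrArg WithLp.snd hpq).symm⟩
  rw [sub_neg_eq_add]
  exact (congrArg WithLp.fst hpq).symm

theorem surjective_maxComp_adjoint_add_self (hd : Dense (A.domain : Set E))
    (hc : A.IsClosed) :
    Function.Surjective fun u : (maxComp A A†).domain ↦ maxComp A A† u + (u : F) := by
  intro b
  obtain ⟨x, y, u, v, hxy, huv, hxv, rfl⟩ := exists_graph_sub_adjoint_graph hd hc 0 b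
  obtain rfl : x = v := sub_eq_zero.mp hxv
  obtain ⟨u, rfl, rfl⟩ := (mem_graph_iff _).mp (mem_graph_maxComp.mpr ⟨x, huv, hxy⟩)
  exact ⟨u, rfl⟩

theorem isSelfAdjoint_maxComp_adjoint (hd : Dense (A.domain : Set E))
    (hc : A.IsClosed) : IsSelfAdjoint (maxComp A A†) := by
  have hA : A†.IsFormalAdjoint A := adjoint_isFormalAdjoint hd
  refine isSelfAdjoint_of_isFormalAdjoint_self_of_surjective (c := 1)
    (isFormalAdjoint_maxComp hA.symm hA) ?_
  simpa using surjective_maxComp_adjoint_add_self hd hc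

end Hilbert

theorem stmt8_general {𝕜 E F : Type*} [RCLike 𝕜]
    [NormedAddCommGroup E] [InnerProductSpace 𝕜 E] [CompleteSpace E]
    [NormedAddCommGroup F] [InnerProductSpace 𝕜 F] [CompleteSpace F]
    (A : E →ₗ.[𝕜] F) (hd : Dense (A.domain : Set E)) (hc : A.IsClosed)
    (hr : IsClosed (LinearMap.range A.toFun : Set F)) (T : F →ₗ.[𝕜] F)
    (hTdom : ∀ y : F, y ∈ T.domain ↔ ∃ hy : y ∈ A†.domain, A† ⟨y, hy⟩ ∈ A.domain)
    (hTval : ∀ (y : F) (hyT : y ∈ T.domain) (h1 : y ∈ A†.domain) (h2 : A† ⟨y, h1⟩ ∈ A.domain),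
      T ⟨y, hyT⟩ = A ⟨A† ⟨y, h1⟩, h2⟩) :
    IsSelfAdjoint T ∧ LinearMap.range T.toFun = LinearMap.range A.toFun := by
  obtain rfl : T = maxComp A A† := eq_maxComp hTdom hTval
  exact ⟨isSelfAdjoint_maxComp_adjoint hd hc, range_maxComp_adjoint hd hc hr⟩

/-- Let `A` be a densely defined closed operator on a complex Hilbert
space `H` which is EP. Then the operator `A A*`, i.e. the operator `T` with domain
`{y ∈ D(A*) : A* y ∈ D(A)}` given by `y ↦ A (A* y)`, is a densely defined closed
operator which is EP; moreover `R(A A*) = R(A)` and `R(A A*)` is closed. -/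
theorem stmt8 (A : H →ₗ.[ℂ] H) (hd : Dense (A.domain : Set H)) (hc : A.IsClosed)
    (hr : IsClosed (A.ran : Set H)) (hEP : A.ran = A.adjoint.ran)
    (T : H →ₗ.[ℂ] H)
    (hTdom : ∀ y : H, y ∈ T.domain ↔
      ∃ hy : y ∈ A.adjoint.domain, A.adjoint ⟨y, hy⟩ ∈ A.domain)
    (hTval : ∀ (y : H) (hyT : y ∈ T.domain) (h1 : y ∈ A.adjoint.domain)
      (h2 : A.adjoint ⟨y, h1⟩ ∈ A.domain), T ⟨y, hyT⟩ = A ⟨A.adjoint ⟨y, h1⟩, h2⟩) :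
    Dense (T.domain : Set H) ∧ T.IsClosed ∧ T.ran = T.adjoint.ran ∧
      T.ran = A.ran ∧ IsClosed (T.ran : Set H) := by
  obtain ⟨hT, hran⟩ : IsSelfAdjoint T ∧ T.ran = A.ran := stmt8_general A hd hc hr T hTdom hTval
  exact ⟨hT.dense_domain, hT.isClosed, congrArg ran hT.symm, hran, hran ▸ hr⟩
end
end

section
/- Let A be a densely defined closed operator on a complex Hilbert space H with closed range such that R(A) ⊆ D(A), and let B be the Moore–Penrose inverse of A. If ‖A(Bx)‖ ≤ ‖B(Ax)‖ for every x ∈ D(A), then A is hypo-EP, i.e., R(A) ⊆ R(A*). -/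
open scoped InnerProductSpace
open LinearPMap

noncomputable section

variable {H : Type*} [NormedAddCommGroup H] [InnerProductSpace ℂ H] [CompleteSpace H]

/-- `B : H →L[ℂ] H` is the Moore–Penrose inverse of the densely defined closed
operator `A` with closed range: for every `y ∈ H`, `B y ∈ D(A)`, `B y ⟂ N(A)`,
`A (B y) = Q y` where `Q` is the orthogonal projection onto `R(A)` (expressed as
`y - A (B y) ∈ R(A)ᗮ`), and `B (A x) = P x` where `P` is the orthogonal projection
onto `N(A)ᗮ` (expressed as `x - B (A x) ∈ (N(A)ᗮ)ᗮ`, while `B (A x) ∈ N(A)ᗮ` is part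
of the second condition). -/
def IsMPInv (A : H →ₗ.[ℂ] H) (B : H →L[ℂ] H) : Prop :=
  (∀ y : H, B y ∈ A.domain) ∧
  (∀ y : H, B y ∈ A.nulᗮ) ∧
  (∀ (y : H) (hy : B y ∈ A.domain), y - A ⟨B y, hy⟩ ∈ A.ranᗮ) ∧
  (∀ x : A.domain, (x : H) - B (A x) ∈ A.nulᗮᗮ)

/-!
Applying the norm inequality to `x ∈ N(A)` gives `A B x = 0`. Since `A B` is the orthogonal
projection onto `R(A)`, this means `x ⟂ R(A)`; hence `N(A) ⟂ R(A)`, that is `R(A) ⊆ N(A)ᗮ`. On the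
other hand `R(A*) = N(A)ᗮ`: on `D(A)`, `B A` is the orthogonal projection onto `N(A)ᗮ`, and taking
inner products with `y ∈ N(A)ᗮ` turns this into `A* B* y = y`.
-/

section Operator

variable {A : H →ₗ.[ℂ] H}

omit [CompleteSpace H] in
theorem nul_le_iff {S : Submodule ℂ H} :
    A.nul ≤ S ↔ ∀ x : A.domain, A x = 0 → (x : H) ∈ S := by
  rw [nul, Submodule.map_le_iff_le_comap]
  rfl

theorem mem_ran_adjoint_iff (hd : Dense (A.domain : Set H)) {y : H} :
    y ∈ A.adjoint.ran ↔ ∃ z : H, ∀ x : A.domain, ⟪y, (x : H)⟫_ℂ = ⟪z, A x⟫_ℂ := by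
  constructor
  · rintro ⟨z, rfl⟩
    exact ⟨z, adjoint_isFormalAdjoint hd z⟩
  · rintro ⟨z, hz⟩
    have hz_mem : z ∈ A.adjoint.domain := mem_adjoint_domain_of_exists z ⟨y, hz⟩
    exact ⟨⟨z, hz_mem⟩, adjoint_apply_eq hd ⟨z, hz_mem⟩ hz⟩

theorem ran_adjoint_le_orthogonal_nul (hd : Dense (A.domain : Set H)) :
    A.adjoint.ran ≤ A.nulᗮ := by
  rw [← Submodule.isOrtho_iff_le, Submodule.isOrtho_comm, Submodule.isOrtho_iff_le, nul_le_iff]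
  intro x hx y hy
  obtain ⟨z, hz⟩ := (mem_ran_adjoint_iff hd).mp hy
  rw [hz x, hx, inner_zero_right]

end Operator

namespace IsMPInv

variable {A : H →ₗ.[ℂ] H} {B : H →L[ℂ] H}

omit [CompleteSpace H] in
theorem mem_orthogonal_ran_iff (hB : IsMPInv A B) {y : H} :
    y ∈ A.ranᗮ ↔ A ⟨B y, hB.1 y⟩ = 0 := by
  have hsub : y - A ⟨B y, hB.1 y⟩ ∈ A.ranᗮ := hB.2.2.1 y (hB.1 y)
  have hran : A ⟨B y, hB.1 y⟩ ∈ A.ran := LinearMap.mem_range_self A.toFun _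
  constructor
  · intro hy
    exact A.ran.orthogonal_disjoint.le_bot ⟨hran, (Submodule.sub_mem_iff_right _ hy).mp hsub⟩
  · intro hy
    rwa [hy, sub_zero] at hsub

theorem inner_adjoint_apply_of_mem_orthogonal_nul (hB : IsMPInv A B) {y : H} (hy : y ∈ A.nulᗮ)
    (x : A.domain) : ⟪ContinuousLinearMap.adjoint B y, A x⟫_ℂ = ⟪y, (x : H)⟫_ℂ := by
  have hortho : ⟪y, (x : H) - B (A x)⟫_ℂ = 0 :=
    Submodule.inner_right_of_mem_orthogonal hy (hB.2.2.2 x)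
  rw [inner_sub_right, sub_eq_zero] at hortho
  rw [ContinuousLinearMap.adjoint_inner_left, hortho]

theorem ran_adjoint_eq_orthogonal_nul (hB : IsMPInv A B) (hd : Dense (A.domain : Set H)) :
    A.adjoint.ran = A.nulᗮ :=
  le_antisymm (ran_adjoint_le_orthogonal_nul hd) fun y hy =>
    (mem_ran_adjoint_iff hd).mpr ⟨ContinuousLinearMap.adjoint B y,
      fun x => (hB.inner_adjoint_apply_of_mem_orthogonal_nul hy x).symm⟩

theorem ran_le_ran_adjoint_iff (hB : IsMPInv A B) (hd : Dense (A.domain : Set H)) :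
    A.ran ≤ A.adjoint.ran ↔ ∀ x : A.domain, A x = 0 → A ⟨B (x : H), hB.1 (x : H)⟩ = 0 := by
  rw [hB.ran_adjoint_eq_orthogonal_nul hd, ← Submodule.isOrtho_iff_le, Submodule.isOrtho_comm,
    Submodule.isOrtho_iff_le, nul_le_iff]
  simp only [hB.mem_orthogonal_ran_iff]

end IsMPInv

theorem stmt17_general (A : H →ₗ.[ℂ] H) (hd : Dense (A.domain : Set H))
    (B : H →L[ℂ] H) (hB : IsMPInv A B)
    (h : ∀ x : A.domain, ‖A ⟨B (x : H), hB.1 (x : H)⟩‖ ≤ ‖B (A x)‖) :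
    A.ran ≤ A.adjoint.ran := by
  refine (hB.ran_le_ran_adjoint_iff hd).mpr fun x hx => ?_
  have hnorm : ‖A ⟨B (x : H), hB.1 (x : H)⟩‖ ≤ 0 := by
    simpa only [hx, _root_.map_zero, norm_zero] using h x
  exact norm_le_zero_iff.mp hnorm

/-- Let `A` be a densely defined closed operator on a complex Hilbert
space `H` with closed range such that `R(A) ⊆ D(A)`, and let `B` be the Moore–Penrose
inverse of `A`. If `‖A (B x)‖ ≤ ‖B (A x)‖` for every `x ∈ D(A)`, then `A` is hypo-EP,
i.e. `R(A) ⊆ R(A*)`. -/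
theorem stmt17 (A : H →ₗ.[ℂ] H) (hd : Dense (A.domain : Set H)) (hc : A.IsClosed)
    (hr : IsClosed (A.ran : Set H)) (hRD : A.ran ≤ A.domain)
    (B : H →L[ℂ] H) (hB : IsMPInv A B)
    (h : ∀ x : A.domain, ‖A ⟨B (x : H), hB.1 (x : H)⟩‖ ≤ ‖B (A x)‖) :
    A.ran ≤ A.adjoint.ran :=
  stmt17_general A hd B hB h
end
end
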